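/- For all odd integers n ≥ 1, C_{2,3}(n) = (1/n) · ∑_{i=0}^{⌊(n−1)/8⌋} multinomial(3((n−1)/2 − i); n−1, (n−1)/2 − 4i, i) · (−1)^i · 2^{(n−1)/2 − 4i}, where multinomial(m; a,b,c) = m!/(a!·b!·c!) for m = a+b+c; and C_{2,3}(n) = 0 for all even n. -/

import Mathlib

/-!
If `y` has zero constant term and `y * v = X`, then the coefficient of `X ^ n` in
`v ^ (n + 1) * y ^ j * y'` is `1` for `j = n` and `0` otherwise: formally it is the residue of
`y' / y ^ (n + 1 - j)`. Extending linearly from `y ^ j` to `g(y)` and taking `g = φ ^ (n + 1)` when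
`v = 1 / φ(y)` gives Lagrange inversion `(n + 1) [X ^ (n + 1)] y = [X ^ n] φ ^ (n + 1)`.

For `d = 2` and any `p` the defining equation is `y * (1 - w(y)) = X` with
`w = 2 t - t ^ (p + 1)` and `t = X ^ (p - 1)`. So `φ ^ (n + 1)` is `(1 - w) ^ (-(n + 1))`, expanded
by the negative binomial series, and only powers of `X ^ (p - 1)` occur in it.
-/

section

open PowerSeries Finset

variable {R : Type*} [CommRing R]

section Substitution

variable {S : Type*} [CommRing S] [Algebra R S] {a : S⟦X⟧}

theorem X_pow_dvd_subst_sub_sum (ha : constantCoeff a = 0) (g : R⟦X⟧) (N : ℕ) :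
    X ^ N ∣ g.subst a - ∑ k ∈ range N, coeff k g • a ^ k := by
  have hs : HasSubst a := .of_constantCoeff_zero' ha
  have htrunc : Polynomial.aeval a (trunc N g) = ∑ k ∈ range N, coeff k g • a ^ k := by
    simp only [Polynomial.aeval_def, eval₂_trunc_eq_sum_range, Algebra.smul_def]
  have hsplit : g.subst a - ∑ k ∈ range N, coeff k g • a ^ k
      = a ^ N * (mk fun i ↦ coeff (i + N) g).subst a := by
    rw [sub_eq_iff_eq_add]
    conv_lhs => rw [eq_X_pow_mul_shift_add_trunc N g]
    rw [subst_add hs, subst_mul hs, subst_pow hs, subst_X hs, subst_coe hs, htrunc]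
  exact hsplit ▸ (pow_dvd_pow_of_dvd (X_dvd_iff.mpr ha) N).mul_right _

theorem coeff_subst_eq_sum_range (ha : constantCoeff a = 0) (g : R⟦X⟧) (n : ℕ) :
    coeff n (g.subst a) = ∑ k ∈ range (n + 1), coeff k g • coeff n (a ^ k) := by
  have h := X_pow_dvd_iff.mp (X_pow_dvd_subst_sub_sum ha g (n + 1)) n n.lt_succ_self
  rw [map_sub, sub_eq_zero] at h
  simpa only [map_sum, coeff_smul] using h

end Substitution

section LagrangeInversion

variable [IsAddTorsionFree R] {y v : R⟦X⟧}

theorem coeff_pow_mul_derivative (hy : constantCoeff y = 0) (hv : y * v = X) (n : ℕ) :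
    coeff n (v ^ (n + 1) * derivative R y) = if n = 0 then 1 else 0 := by
  have hleibniz : derivative R y * v + y * derivative R v = 1 := by
    have := congrArg (derivative R) hv
    rw [Derivation.leibniz, derivative_X, smul_eq_mul, smul_eq_mul] at this
    linear_combination this
  cases n with
  | zero => simpa [hy, mul_comm] using congrArg constantCoeff hleibniz
  | succ n =>
    have hsplit : v ^ (n + 1 + 1) * derivative R y
        = v ^ (n + 1) - X * (v ^ n * derivative R v) := by
      rw [← hv]
      linear_combination v ^ (n + 1) * hleibniz
    have hpow : (n + 1) • coeff (n + 1) (v ^ (n + 1))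
        = (n + 1) • coeff n (v ^ n * derivative R v) := by
      rw [← map_nsmul _ _ (v ^ n * _), nsmul_eq_mul, nsmul_eq_mul, ← mul_assoc, mul_comm,
        Nat.cast_succ, ← coeff_derivative, derivative_pow, Nat.add_sub_cancel]
    rw [hsplit, map_sub, coeff_succ_X_mul, nsmul_right_injective n.succ_ne_zero hpow, sub_self,
      if_neg n.succ_ne_zero]

theorem coeff_pow_mul_pow_mul_derivative (hy : constantCoeff y = 0) (hv : y * v = X) (n j : ℕ) :
    coeff n (v ^ (n + 1) * y ^ j * derivative R y) = if j = n then 1 else 0 := by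
  obtain hj | hj := le_or_gt j n
  · obtain ⟨r, rfl⟩ := Nat.exists_eq_add_of_le' hj
    have hsplit : v ^ (r + j + 1) * y ^ j * derivative R y
        = X ^ j * (v ^ (r + 1) * derivative R y) := by
      rw [← hv]
      ring
    simp [hsplit, coeff_X_pow_mul, coeff_pow_mul_derivative hy hv]
  · have hdvd : X ^ j ∣ v ^ (n + 1) * y ^ j * derivative R y :=
      ((pow_dvd_pow_of_dvd (X_dvd_iff.mpr hy) j).mul_left _).mul_right _
    rw [X_pow_dvd_iff.mp hdvd n hj, if_neg hj.ne']

theorem coeff_pow_mul_subst_mul_derivative (hy : constantCoeff y = 0) (hv : y * v = X)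
    (g : R⟦X⟧) (n : ℕ) :
    coeff n (v ^ (n + 1) * g.subst y * derivative R y) = coeff n g := by
  obtain ⟨q, hq⟩ := X_pow_dvd_subst_sub_sum hy g (n + 1)
  have hsplit : v ^ (n + 1) * g.subst y * derivative R y
      = ∑ k ∈ range (n + 1), coeff k g • (v ^ (n + 1) * y ^ k * derivative R y)
        + X ^ (n + 1) * (v ^ (n + 1) * q * derivative R y) := by
    rw [sub_eq_iff_eq_add.mp hq, mul_add, add_mul, mul_sum, sum_mul, add_comm]
    simp only [mul_smul_comm, smul_mul_assoc]
    ring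
  simp [hsplit, coeff_pow_mul_pow_mul_derivative hy hv, coeff_X_pow_mul']

theorem lagrange_inversion {φ ψ : R⟦X⟧} (hφ : φ * ψ = 1) (hy : constantCoeff y = 0)
    (hψ : y * ψ.subst y = X) (n : ℕ) :
    (n + 1 : R) * coeff (n + 1) y = coeff n (φ ^ (n + 1)) := by
  have hs : HasSubst y := .of_constantCoeff_zero' hy
  have hinv : ψ.subst y * φ.subst y = 1 := by
    rw [← subst_mul hs, mul_comm, hφ, ← coe_substAlgHom hs, map_one]
  rw [← coeff_pow_mul_subst_mul_derivative hy hψ (φ ^ (n + 1)), subst_pow hs, ← mul_pow, hinv,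
    one_pow, one_mul, coeff_derivative, mul_comm]

end LagrangeInversion

section NegativeBinomial

variable {w : R⟦X⟧}

theorem mk_one_subst_mul_one_sub (hw : constantCoeff w = 0) :
    (mk 1 : R⟦X⟧).subst w * (1 - w) = 1 := by
  have hs : HasSubst w := .of_constantCoeff_zero' hw
  have h := congrArg (substAlgHom (R := R) hs) (mk_one_mul_one_sub_eq_one R)
  rwa [map_mul, map_sub, map_one, substAlgHom_X, coe_substAlgHom] at h

theorem coeff_mk_one_subst_pow (hw : constantCoeff w = 0) (n m : ℕ) :
    coeff m ((mk 1 : R⟦X⟧).subst w ^ (n + 1))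
      = ∑ k ∈ range (m + 1), ((n + k).choose n : R) * coeff m (w ^ k) := by
  rw [← subst_pow (.of_constantCoeff_zero' hw), mk_one_pow_eq_mk_choose_add,
    coeff_subst_eq_sum_range hw]
  simp only [coeff_mk, smul_eq_mul]

theorem choose_mul_choose_eq_multinomial (n j i : ℕ) :
    (n + (j + i)).choose n * (j + i).choose j = Nat.multinomial univ ![n, j, i] := by
  rw [Nat.multinomial_univ_three, add_assoc]
  refine (Nat.div_eq_of_eq_mul_right (by simp [Nat.factorial_pos]) ?_).symm
  rw [← Nat.add_choose_mul_factorial_mul_factorial n (j + i),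
    ← Nat.add_choose_mul_factorial_mul_factorial j i, Nat.choose_symm_add, Nat.choose_symm_add]
  ring

theorem cast_multinomial_three {K : Type*} [Field K] [CharZero K] (n j i : ℕ) :
    (Nat.multinomial univ ![n, j, i] : K)
      = ((n + j + i).factorial : K) / (n.factorial * j.factorial * i.factorial) := by
  rw [← choose_mul_choose_eq_multinomial, Nat.cast_mul, Nat.cast_add_choose, Nat.cast_add_choose,
    add_assoc]
  have := Nat.factorial_ne_zero (j + i)
  field_simp

theorem coeff_binomial_pow (a b : R) (s k m : ℕ) :
    coeff m ((C a * X + C b * X ^ s) ^ k)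
      = ∑ ji ∈ antidiagonal k with ji.1 + s * ji.2 = m,
          (k.choose ji.1 : R) * (a ^ ji.1 * b ^ ji.2) := by
  rw [Commute.add_pow' (.all _ _), map_sum, sum_filter]
  refine sum_congr rfl fun ⟨j, i⟩ _ ↦ ?_
  have hterm : k.choose j • ((C a * X) ^ j * (C b * X ^ s) ^ i)
      = C ((k.choose j : R) * (a ^ j * b ^ i)) * X ^ (j + s * i) := by
    simp only [nsmul_eq_mul, map_mul, map_pow, map_natCast]
    ring
  rw [hterm, coeff_C_mul_X_pow]
  simp only [eq_comm]

theorem sum_sum_antidiagonal_filter_add_mul_eq {M : Type*} [AddCommMonoid M] {s : ℕ} (hs : 0 < s)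
    (f : ℕ → ℕ → M) (m : ℕ) :
    ∑ k ∈ range (m + 1), ∑ ji ∈ antidiagonal k with ji.1 + s * ji.2 = m, f ji.1 ji.2
      = ∑ i ∈ range (m / s + 1), f (m - s * i) i := by
  have hle {i : ℕ} : i < m / s + 1 ↔ s * i ≤ m := by
    rw [Nat.lt_succ_iff, Nat.le_div_iff_mul_le hs, mul_comm]
  rw [sum_sigma']
  refine sum_bij' (fun x _ ↦ x.2.2) (fun i _ ↦ ⟨m - s * i + i, (m - s * i, i)⟩) ?_ ?_ ?_ ?_ ?_
  · rintro ⟨k, j, i⟩ h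
    simp only [mem_sigma, mem_filter, mem_range, hle] at h ⊢
    lia
  · intro i h
    have := Nat.le_mul_of_pos_left i hs
    simp only [mem_sigma, mem_filter, mem_range, HasAntidiagonal.mem_antidiagonal, hle] at h ⊢
    lia
  · rintro ⟨k, j, i⟩ h
    obtain ⟨-, rfl, rfl⟩ : k < m + 1 ∧ j + i = k ∧ j + s * i = m := by simpa using h
    simp only [Nat.add_sub_cancel]
  · exact fun i _ ↦ rfl
  · rintro ⟨k, j, i⟩ h
    obtain ⟨-, -, rfl⟩ : k < m + 1 ∧ j + i = k ∧ j + s * i = m := by simpa using h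
    simp only [Nat.add_sub_cancel]

theorem coeff_mk_one_subst_binomial_pow (a b : R) {s : ℕ} (hs : 0 < s) (n m : ℕ) :
    coeff m ((mk 1 : R⟦X⟧).subst (C a * X + C b * X ^ s) ^ (n + 1))
      = ∑ i ∈ range (m / s + 1),
          (Nat.multinomial univ ![n, m - s * i, i] : R) * (a ^ (m - s * i) * b ^ i) := by
  have hw : constantCoeff (C a * X + C b * X ^ s) = 0 := by simp [hs.ne']
  simp only [coeff_mk_one_subst_pow hw, coeff_binomial_pow, mul_sum]
  rw [← sum_sum_antidiagonal_filter_add_mul_eq hs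
    fun j i ↦ (Nat.multinomial univ ![n, j, i] : R) * (a ^ j * b ^ i)]
  refine sum_congr rfl fun k _ ↦ sum_congr rfl fun ⟨j, i⟩ hji ↦ ?_
  obtain ⟨rfl, -⟩ : j + i = k ∧ j + s * i = m := by simpa using hji
  rw [← choose_mul_choose_eq_multinomial, Nat.cast_mul, mul_assoc]

end NegativeBinomial

theorem succ_mul_coeff_succ_of_trinomial [IsAddTorsionFree R] {a b : R} {d s : ℕ}
    (hd : d ≠ 0) (hs : 0 < s) {y : R⟦X⟧} (hy : constantCoeff y = 0)
    (heq : y * (1 - (C a * y ^ d + C b * y ^ (d * s))) = X) (n : ℕ) :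
    (n + 1 : R) * coeff (n + 1) y =
      if d ∣ n then
        ∑ i ∈ range (n / d / s + 1),
          (Nat.multinomial univ ![n, n / d - s * i, i] : R) * (a ^ (n / d - s * i) * b ^ i)
      else 0 := by
  have hsy : HasSubst y := .of_constantCoeff_zero' hy
  set w : R⟦X⟧ := C a * X + C b * X ^ s
  have hw : constantCoeff w = 0 := by simp [w, hs.ne']
  have hinv : expand d hd ((mk 1 : R⟦X⟧).subst w) * expand d hd (1 - w) = 1 := by
    rw [← map_mul, mk_one_subst_mul_one_sub hw, map_one]
  have hψ : y * (expand d hd (1 - w)).subst y = X := by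
    have hC (r : R) : (C r).subst y = C r := subst_C r
    rw [← heq, ← coe_substAlgHom hsy]
    simp only [w, map_sub, map_one, map_add, map_mul, map_pow, expand_C, expand_X, substAlgHom_X,
      coe_substAlgHom, hC, pow_mul]
  rw [lagrange_inversion hinv hy hψ, ← map_pow, coeff_expand,
    coeff_mk_one_subst_binomial_pow a b hs]

theorem statement_4_general {K : Type*} [Field K] [CharZero K] {p : ℕ} (hp : 2 ≤ p) {y : K⟦X⟧}
    (h0 : constantCoeff y = 0)
    (heq : ∑ k ∈ range (2 + 1), (-1 : K⟦X⟧) ^ k * (Nat.choose 2 k : K⟦X⟧) * y ^ p ^ k = X)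
    {n : ℕ} (hn : 1 ≤ n) :
    (p - 1 ∣ n - 1 →
      coeff n y =
        (1 / (n : K)) *
          ∑ i ∈ range ((n - 1) / (p ^ 2 - 1) + 1),
            ((Nat.factorial (p * ((n - 1) / (p - 1) - i)) : K) /
                ((Nat.factorial (n - 1) : K) *
                  (Nat.factorial ((n - 1) / (p - 1) - (p + 1) * i) : K) *
                  (Nat.factorial i : K))) *
              (-1 : K) ^ i * (2 : K) ^ ((n - 1) / (p - 1) - (p + 1) * i)) ∧
    (¬ p - 1 ∣ n - 1 → coeff n y = 0) := by
  obtain ⟨d, rfl⟩ : ∃ d, p = d + 1 := ⟨p - 1, by lia⟩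
  obtain ⟨n, rfl⟩ : ∃ m, n = m + 1 := ⟨n - 1, by lia⟩
  have hd : d ≠ 0 := by lia
  have hne : (n + 1 : K) ≠ 0 := n.cast_add_one_ne_zero
  have hfactored : y * (1 - (C 2 * y ^ d + C (-1) * y ^ (d * (d + 2)))) = X := by
    rw [← heq]
    simp only [sum_range_succ, range_zero, sum_empty, map_neg, map_one, map_ofNat,
      Nat.choose_zero_right, Nat.choose_one_right, Nat.choose_self, Nat.cast_one, Nat.cast_ofNat]
    ring
  have hrange : (d + 1) ^ 2 - 1 = d * (d + 2) :=
    Nat.sub_eq_of_eq_add (by ring)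
  have hcoeff := succ_mul_coeff_succ_of_trinomial hd (d + 1).succ_pos h0 hfactored n
  simp only [Nat.add_sub_cancel, Nat.cast_succ]
  refine ⟨?_, fun hdvd ↦ ?_⟩
  · rintro ⟨m, rfl⟩
    rw [if_pos (dvd_mul_right d m)] at hcoeff
    rw [one_div, eq_inv_mul_iff_mul_eq₀ hne, hcoeff, Nat.mul_div_cancel_left m (by lia),
      hrange, Nat.mul_div_mul_left _ _ (by lia)]
    refine sum_congr rfl fun i hi ↦ ?_
    have hle : (d + 2) * i ≤ m := by
      rw [mem_range, Nat.lt_succ_iff, Nat.le_div_iff_mul_le (by lia)] at hi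
      lia
    have htotal : d * m + (m - (d + 2) * i) + i = (d + 1) * (m - i) := by
      zify [hle, show i ≤ m by lia]
      ring
    rw [cast_multinomial_three, htotal]
    ring
  · rw [if_neg hdvd] at hcoeff
    exact (mul_eq_zero.mp hcoeff).resolve_left hne

end

/-- For all odd `n ≥ 1`,
`C_{2,3}(n) = (1/n) ⬝ ∑_{i=0}^{⌊(n-1)/8⌋}
  multinomial(3((n-1)/2 - i); n-1, (n-1)/2 - 4i, i) (-1)^i 2^{(n-1)/2 - 4i}`,
and `C_{2,3}(n) = 0` for all even `n`; here `C_{2,3}(n)` is the coefficient of `x^n` in the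
unique power series `y` with zero constant term satisfying
`∑_{k=0}^{2} (-1)^k C(2,k) y^{3^k} = x`, and `multinomial(m; a,b,c) = m!/(a! b! c!)` for
`m = a + b + c`. -/
theorem statement_4
    (y : PowerSeries ℚ)
    (h0 : PowerSeries.constantCoeff y = 0)
    (heq : ∑ k ∈ Finset.range (2 + 1),
        (-1 : PowerSeries ℚ) ^ k * (Nat.choose 2 k : PowerSeries ℚ) * y ^ 3 ^ k
        = PowerSeries.X)
    (n : ℕ) (hn : 1 ≤ n) :
    (Odd n →
      PowerSeries.coeff n y =
        (1 / (n : ℚ)) *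
          ∑ i ∈ Finset.range ((n - 1) / 8 + 1),
            ((Nat.factorial (3 * ((n - 1) / 2 - i)) : ℚ) /
                ((Nat.factorial (n - 1) : ℚ) * (Nat.factorial ((n - 1) / 2 - 4 * i) : ℚ) *
                  (Nat.factorial i : ℚ))) *
              (-1 : ℚ) ^ i * (2 : ℚ) ^ ((n - 1) / 2 - 4 * i)) ∧
    (Even n → PowerSeries.coeff n y = 0) := by
  obtain ⟨hdvd, hndvd⟩ := statement_4_general (p := 3) (by lia) h0 heq hn
  exact ⟨fun hodd ↦ hdvd (hodd.tsub_odd odd_one).two_dvd,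
    fun heven ↦ hndvd (by rw [Nat.even_iff] at heven; lia)⟩
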